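/- Fix 1 ≤ i ≤ N−1 and regard the Rouquier complexes F_i and F_i' as complexes of (R^{s_i}, R)-bimodules by restricting the left R-action to the subring R^{s_i} (this is composition with the merge bimodule). Then F_i is homotopy equivalent, as a complex of (R^{s_i}, R)-bimodules, to the bimodule R concentrated in homological degree 1 with zero differential, and F_i' is homotopy equivalent, as a complex of (R^{s_i}, R)-bimodules, to the bimodule R concentrated in homological degree −1 (the fork-sliding relations). -/

import Mathlib

set_option synthInstance.maxHeartbeats 1000000
set_option maxHeartbeats 1000000
set_option linter.unusedSectionVars false

open MvPolynomial TensorProduct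

noncomputable section

/-- The polynomial ring `R = K[x_1, ..., x_N]`. -/
abbrev Rp (K : Type) [Field K] (N : ℕ) := MvPolynomial (Fin N) K

variable (K : Type) [Field K] [CharZero K] (N : ℕ)

/-- The invariant ring `R^{s}` of the transposition `s` exchanging `x_i` and `x_j`. -/
def swapInv (i j : Fin N) : Subalgebra K (Rp K N) where
  carrier := {f | rename (⇑(Equiv.swap i j)) f = f}
  mul_mem' := by
    intro a b ha hb
    simp only [Set.mem_setOf_eq, map_mul] at *
    rw [ha, hb]
  one_mem' := by simp only [Set.mem_setOf_eq, map_one]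
  add_mem' := by
    intro a b ha hb
    simp only [Set.mem_setOf_eq, map_add] at *
    rw [ha, hb]
  zero_mem' := by simp only [Set.mem_setOf_eq, map_zero]
  algebraMap_mem' := by
    intro c
    simp [Set.mem_setOf_eq, MvPolynomial.algebraMap_eq]

/-- The Soergel bimodule `B_i = R ⊗_{R^{s_i}} R`. -/
abbrev BS (i j : Fin N) := TensorProduct ↥(swapInv K N i j) (Rp K N) (Rp K N)

/-- The enveloping algebra `S = R ⊗_K R`; an `S`-module is an `R`-bimodule. -/
abbrev SEnv := TensorProduct K (Rp K N) (Rp K N)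

/-- `R` as `S`-module (the regular bimodule) via the multiplication map. -/
instance : Module (SEnv K N) (Rp K N) :=
  (Algebra.TensorProduct.lmul' K (S := Rp K N)).toRingHom.toModule

/-- The canonical `K`-algebra map `S = R ⊗_K R → B_i`, `a ⊗ b ↦ a ⊗ b`. -/
def toBS (i j : Fin N) : SEnv K N →ₐ[K] BS K N i j :=
  Algebra.TensorProduct.productMap
    (Algebra.TensorProduct.includeLeft (S := K))
    ((Algebra.TensorProduct.includeRight).restrictScalars K)

/-- `B_i` as `S`-module: the left `R`-action on the left tensor factor, the
right `R`-action on the right tensor factor. -/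
instance (i j : Fin N) : Module (SEnv K N) (BS K N i j) :=
  (toBS K N i j).toRingHom.toModule

end

/-!
STATEMENT 13: the fork-sliding relations.  Regard the Rouquier complexes
`F_i = (B_i → R)` (degrees 1, 0) and `F_i' = (R → B_i)` (degrees 0, -1) as
complexes of `(R^{s_i}, R)`-bimodules, i.e. modules over
`S' = R^{s_i} ⊗_K R`, by restricting the left `R`-action to `R^{s_i}`
(composition with the merge bimodule).  Then `F_i` is homotopy equivalent to
the bimodule `R` concentrated in degree `1` (zero differential), and `F_i'` is
homotopy equivalent to `R` concentrated in degree `-1`.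

The homotopy equivalences are spelled out as chain maps plus homotopies; note
that a chain map between complexes concentrated in single adjacent degrees has
no constraints, and homotopies to/from a one-term complex are forced to be
strict where no room exists, which yields exactly the six equations below for
each of the two statements. -/

noncomputable section
variable (K : Type) [Field K] [CharZero K] (N : ℕ)

/-- The mixed enveloping algebra `S' = R^{s_i} ⊗_K R`; a module over it is an
`(R^{s_i}, R)`-bimodule. -/
abbrev SMix (i j : Fin N) := TensorProduct K ↥(swapInv K N i j) (Rp K N)

/-- `R` as `(R^{s_i}, R)`-bimodule: `R^{s_i}` multiplies on the left (through
the inclusion `R^{s_i} ⊆ R`), `R` multiplies on the right. -/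
instance (i j : Fin N) : Module (SMix K N i j) (Rp K N) :=
  (Algebra.TensorProduct.productMap (R := K) (S := Rp K N)
    (IsScalarTower.toAlgHom K ↥(swapInv K N i j) (Rp K N))
    (AlgHom.id K (Rp K N))).toRingHom.toModule

/-- `B_i` as `(R^{s_i}, R)`-bimodule: `R^{s_i}` acts on the left tensor factor
and `R` acts on the right tensor factor. -/
instance (i j : Fin N) : Module (SMix K N i j) (BS K N i j) :=
  (Algebra.TensorProduct.productMap (R := K) (S := BS K N i j)
    (IsScalarTower.toAlgHom K ↥(swapInv K N i j) (BS K N i j))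
    (Algebra.TensorProduct.includeRight.restrictScalars K)).toRingHom.toModule

/-- Half the root: `α/2 = (x_i - x_j)/2`. -/
def hlf (i j : Fin N) : Rp K N := C (2⁻¹ : K) * (X i - X j)

end

noncomputable section Helpers
variable {K : Type} [Field K] [CharZero K] {N : ℕ}

/-- Additive maps commuting with pure tensors are linear over the mixed enveloping algebra. -/
def mkLin {i j : Fin N} {M M' : Type} [AddCommGroup M] [AddCommGroup M']
    [Module (SMix K N i j) M] [Module (SMix K N i j) M'] (φ : M →+ M')
    (h : ∀ (a : swapInv K N i j) (r : Rp K N) (m : M),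
      φ ((a ⊗ₜ[K] r : SMix K N i j) • m) = (a ⊗ₜ[K] r : SMix K N i j) • φ m) :
    M →ₗ[SMix K N i j] M' where
  toFun := φ
  map_add' := φ.map_add
  map_smul' := by
    intro c m
    induction c using TensorProduct.induction_on with
    | zero =>
      exact (congrArg φ (zero_smul (SMix K N i j) m)).trans
        (φ.map_zero.trans (zero_smul (SMix K N i j) (φ m)).symm)
    | tmul a r => exact h a r m
    | add x y hx hy =>
      rw [add_smul, map_add, hx, hy]
      simp only [RingHom.id_apply, add_smul]

theorem smul_R {i j : Fin N} (a : swapInv K N i j) (r m : Rp K N) :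
    (a ⊗ₜ[K] r : SMix K N i j) • m = a.1 * r * m := by
  change (Algebra.TensorProduct.productMap (R := K) (S := Rp K N)
    (IsScalarTower.toAlgHom K ↥(swapInv K N i j) (Rp K N))
    (AlgHom.id K (Rp K N))) (a ⊗ₜ r) * m = _
  rw [Algebra.TensorProduct.productMap_apply_tmul]
  rfl

theorem smul_B {i j : Fin N} (a : swapInv K N i j) (r x y : Rp K N) :
    (a ⊗ₜ[K] r : SMix K N i j) • (x ⊗ₜ y : BS K N i j) = (a.1 * x) ⊗ₜ (r * y) := by
  change (Algebra.TensorProduct.productMap (R := K) (S := BS K N i j)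
    (IsScalarTower.toAlgHom K ↥(swapInv K N i j) (BS K N i j))
    (Algebra.TensorProduct.includeRight.restrictScalars K)) (a ⊗ₜ r) * (x ⊗ₜ y) = _
  rw [Algebra.TensorProduct.productMap_apply_tmul]
  change (a.1 ⊗ₜ[swapInv K N i j] (1 : Rp K N)) * ((1 : Rp K N) ⊗ₜ r) * (x ⊗ₜ y) = _
  rw [Algebra.TensorProduct.tmul_mul_tmul, Algebra.TensorProduct.tmul_mul_tmul, mul_one, one_mul]

/-- Moving an invariant polynomial across the tensor sign. -/
theorem tmul_move {i j : Fin N} (a x y : Rp K N) (ha : a ∈ swapInv K N i j) :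
    ((a * x) ⊗ₜ y : BS K N i j) = x ⊗ₜ (a * y) :=
  TensorProduct.smul_tmul (⟨a, ha⟩ : swapInv K N i j) x y

theorem mem_swapInv {i j : Fin N} (f : Rp K N) :
    f ∈ swapInv K N i j ↔ rename (⇑(Equiv.swap i j)) f = f := Iff.rfl

theorem swap_hlf (i j : Fin N) : rename (⇑(Equiv.swap i j)) (hlf K N i j) = - hlf K N i j := by
  simp only [hlf, map_mul, map_sub, rename_C, rename_X, Equiv.swap_apply_left,
    Equiv.swap_apply_right]
  ring

theorem hlf_ne {i j : Fin N} (h : i ≠ j) : hlf K N i j ≠ 0 := by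
  refine mul_ne_zero (by simp) (sub_ne_zero.2 fun e => h (X_injective e))

theorem two_half : (C (2⁻¹ : K) : Rp K N) * 2 = 1 := by
  have : (2 : Rp K N) = C 2 := (map_ofNat C 2).symm
  rw [this, ← C_mul, inv_mul_cancel₀ two_ne_zero, C_1]

theorem hlf_sq (i j : Fin N) : hlf K N i j * hlf K N i j ∈ swapInv K N i j := by
  rw [mem_swapInv, map_mul, swap_hlf, neg_mul_neg]

theorem decomp (i j : Fin N) (f : Rp K N) : ∃ p ∈ swapInv K N i j, ∃ g ∈ swapInv K N i j,
    f = p + g * hlf K N i j := by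
  induction f using MvPolynomial.induction_on with
  | C a => exact ⟨C a, by simp [mem_swapInv], 0, zero_mem _, by simp⟩
  | add f f' hf hf' =>
    obtain ⟨p, hp, g, hg, rfl⟩ := hf
    obtain ⟨p', hp', g', hg', rfl⟩ := hf'
    exact ⟨p + p', add_mem hp hp', g + g', add_mem hg hg', by ring⟩
  | mul_X f k hf =>
    obtain ⟨p, hp, g, hg, rfl⟩ := hf
    have hX : ∃ p ∈ swapInv K N i j, ∃ g ∈ swapInv K N i j,
        (X k : Rp K N) = p + g * hlf K N i j := by
      have hm : (C (2⁻¹ : K) * (X i + X j) : Rp K N) ∈ swapInv K N i j := by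
        rw [mem_swapInv]
        simp only [map_mul, map_add, rename_C, rename_X, Equiv.swap_apply_left,
          Equiv.swap_apply_right]
        ring
      by_cases h1 : k = i
      · subst h1
        refine ⟨_, hm, 1, one_mem _, ?_⟩
        rw [hlf]
        linear_combination (-X k) * (two_half (K := K) (N := N))
      by_cases h2 : k = j
      · subst h2
        refine ⟨_, hm, -1, neg_mem (one_mem _), ?_⟩
        rw [hlf]
        linear_combination (-X k) * (two_half (K := K) (N := N))
      · exact ⟨X k, by rw [mem_swapInv, rename_X, Equiv.swap_apply_of_ne_of_ne h1 h2],
          0, zero_mem _, by simp⟩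
    obtain ⟨p', hp', g', hg', hX⟩ := hX
    refine ⟨p * p' + g * g' * (hlf K N i j * hlf K N i j),
      add_mem (mul_mem hp hp') (mul_mem (mul_mem hg hg') (hlf_sq i j)),
      p * g' + g * p', add_mem (mul_mem hp hg') (mul_mem hg hp'), ?_⟩
    rw [hX]
    ring

theorem decomp_unique {i j : Fin N} (h : i ≠ j) {p g p' g' : Rp K N}
    (hp : p ∈ swapInv K N i j) (hg : g ∈ swapInv K N i j)
    (hp' : p' ∈ swapInv K N i j) (hg' : g' ∈ swapInv K N i j)
    (e : p + g * hlf K N i j = p' + g' * hlf K N i j) : g = g' := by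
  have e2 := congrArg (rename (⇑(Equiv.swap i j))) e
  rw [mem_swapInv] at hp hg hp' hg'
  simp only [map_add, map_mul, swap_hlf, hp, hg, hp', hg'] at e2
  have h2 : (2 * hlf K N i j) * g = (2 * hlf K N i j) * g' := by
    linear_combination e - e2
  exact mul_left_cancel₀ (mul_ne_zero two_ne_zero (hlf_ne h)) h2

/-- The Demazure operator: an `R^s`-linear map with values in `R^s`. -/
theorem exists_dem {i j : Fin N} (h : i ≠ j) :
    ∃ D : Rp K N →ₗ[swapInv K N i j] Rp K N, (∀ f, D f ∈ swapInv K N i j) ∧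
      (∀ f, f - D f * hlf K N i j ∈ swapInv K N i j) ∧ D (hlf K N i j) = 1 ∧ D 1 = 0 := by
  choose p hp g hg e using decomp (K := K) i j
  have key : ∀ f q c, q ∈ swapInv K N i j → c ∈ swapInv K N i j → f = q + c * hlf K N i j →
      g f = c := fun f q c hq hc hf =>
    decomp_unique h (hp f) (hg f) hq hc ((e f).symm.trans hf)
  refine ⟨{ toFun := g, map_add' := ?_, map_smul' := ?_ }, hg, ?_, ?_, ?_⟩
  · intro x y
    refine key _ (p x + p y) _ (add_mem (hp x) (hp y)) (add_mem (hg x) (hg y)) ?_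
    linear_combination e x + e y
  · intro a x
    refine key _ (a.1 * p x) (a.1 * g x) (mul_mem a.2 (hp x)) (mul_mem a.2 (hg x)) ?_
    change a.1 * x = _
    linear_combination a.1 * e x
  · intro f
    have : f - g f * hlf K N i j = p f := by linear_combination e f
    change f - g f * hlf K N i j ∈ _
    rw [this]
    exact hp f
  · exact key _ 0 1 (zero_mem _) (one_mem _) (by ring)
  · exact key _ 1 0 (one_mem _) (zero_mem _) (by ring)

/-- The map `B → R`, `x ⊗ y ↦ T x * y`, for an `R^s`-linear `T : R → R`. -/
def outMap {i j : Fin N} (T : Rp K N →ₗ[swapInv K N i j] Rp K N) :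
    BS K N i j →ₗ[SMix K N i j] Rp K N :=
  mkLin (TensorProduct.lift ((LinearMap.mul (swapInv K N i j) (Rp K N)).comp T)).toAddMonoidHom (by
    intro a r m
    induction m using TensorProduct.induction_on with
    | zero => simp
    | add x y hx hy => rw [smul_add, map_add, hx, hy, map_add, smul_add]
    | tmul x y =>
      rw [smul_B, smul_R]
      change T (a • x) * (r * y) = a.1 * r * (T x * y)
      rw [map_smul]
      change a.1 * T x * (r * y) = _
      ring)

theorem outMap_tmul {i j : Fin N} (T : Rp K N →ₗ[swapInv K N i j] Rp K N) (x y : Rp K N) :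
    outMap T (x ⊗ₜ y) = T x * y := rfl

/-- The map `R → B`, `r ↦ c ⊗ r`. -/
def inMapC (i j : Fin N) (c : Rp K N) : Rp K N →ₗ[SMix K N i j] BS K N i j :=
  mkLin (TensorProduct.mk (swapInv K N i j) (Rp K N) (Rp K N) c).toAddMonoidHom (by
    intro a r m
    rw [smul_R]
    change (c ⊗ₜ (a.1 * r * m) : BS K N i j) = (a ⊗ₜ[K] r : SMix K N i j) •
      (c ⊗ₜ m : BS K N i j)
    rw [smul_B, mul_assoc, tmul_move _ _ _ a.2])

theorem inMapC_apply (i j : Fin N) (c r : Rp K N) :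
    inMapC i j c r = (c ⊗ₜ r : BS K N i j) := rfl

/-- Multiplication by `c` as a bimodule map `R → R`. -/
def mulMap (i j : Fin N) (c : Rp K N) : Rp K N →ₗ[SMix K N i j] Rp K N :=
  mkLin (AddMonoidHom.mulLeft c) (by
    intro a r m
    rw [smul_R, smul_R]
    change c * _ = _ * (c * _)
    ring)

theorem mulMap_apply (i j : Fin N) (c r : Rp K N) : mulMap i j c r = c * r := rfl

theorem ext_B {i j : Fin N} {M : Type} [AddCommGroup M] [Module (SMix K N i j) M]
    {f g : BS K N i j →ₗ[SMix K N i j] M}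
    (h : ∀ x y : Rp K N, f (x ⊗ₜ y) = g (x ⊗ₜ y)) : f = g := by
  refine LinearMap.ext fun m => ?_
  induction m using TensorProduct.induction_on with
  | zero => simp
  | add x y hx hy => rw [map_add, map_add, hx, hy]
  | tmul x y => exact h x y

end Helpers

/-- fix `1 ≤ i ≤ N-1` (below `i' = i+1`) and regard the Rouquier
complexes `F_i = (B_i →d R)` (degrees 1, 0; `d` the multiplication map) and
`F_i' = (R →d' B_i)` (degrees 0, -1; `d'` given by
`f ↦ (1/2)·f·((x_i - x_{i'}) ⊗ 1 + 1 ⊗ (x_i - x_{i'}))`) as complexes of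
`(R^{s_i}, R)`-bimodules (modules over `S' = R^{s_i} ⊗_K R`).  Then `F_i` is
homotopy equivalent, as a complex of `(R^{s_i}, R)`-bimodules, to `R`
concentrated in homological degree `1` with zero differential, and `F_i'` is
homotopy equivalent to `R` concentrated in homological degree `-1`
(the fork-sliding relations). -/
theorem fork_sliding_relations
    (K : Type) [Field K] [CharZero K] (N : ℕ) (i i' : Fin N)
    (hadj : i.val + 1 = i'.val)
    (d : BS K N i i' →ₗ[SMix K N i i'] Rp K N)
    (hd : ∀ x y : Rp K N, d (x ⊗ₜ y) = x * y)
    (d' : Rp K N →ₗ[SMix K N i i'] BS K N i i')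
    (hd' : ∀ r : Rp K N, d' r = (r * hlf K N i i') ⊗ₜ 1 + r ⊗ₜ hlf K N i i') :
    -- `F_i` is homotopy equivalent to `R` concentrated in degree `1`:
    (∃ (v : Rp K N →ₗ[SMix K N i i'] BS K N i i')
       (u : BS K N i i' →ₗ[SMix K N i i'] Rp K N)
       (k : Rp K N →ₗ[SMix K N i i'] BS K N i i'),
       d ∘ₗ v = 0 ∧
       u ∘ₗ v = LinearMap.id ∧
       v ∘ₗ u + k ∘ₗ d = LinearMap.id ∧
       d ∘ₗ k = LinearMap.id) ∧
    -- `F_i'` is homotopy equivalent to `R` concentrated in degree `-1`: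
    (∃ (f : Rp K N →ₗ[SMix K N i i'] BS K N i i')
       (g : BS K N i i' →ₗ[SMix K N i i'] Rp K N)
       (k : BS K N i i' →ₗ[SMix K N i i'] Rp K N),
       g ∘ₗ d' = 0 ∧
       g ∘ₗ f = LinearMap.id ∧
       f ∘ₗ g + d' ∘ₗ k = LinearMap.id ∧
       k ∘ₗ d' = LinearMap.id) := by
  have hne : i ≠ i' := fun e => by
    rw [e] at hadj
    omega
  obtain ⟨D, hD, hP, hDh, hD1⟩ := exists_dem (K := K) hne
  set h := hlf K N i i' with hh
  have hd'' : ∀ r : Rp K N, d' r = h ⊗ₜ r + 1 ⊗ₜ (h * r) := by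
    intro r
    have e : r = ((1 : swapInv K N i i') ⊗ₜ[K] r : SMix K N i i') • (1 : Rp K N) := by
      rw [smul_R]
      simp
    conv_lhs => rw [e, map_smul, hd', smul_add, smul_B, smul_B]
    simp only [OneMemClass.coe_one, one_mul, mul_one, ← hh]
    rw [mul_comm r h]
  have split : ∀ x y : Rp K N, (x ⊗ₜ y : BS K N i i') =
      1 ⊗ₜ ((x - D x * h) * y) + h ⊗ₜ (D x * y) := by
    intro x y
    rw [← tmul_move _ _ _ (hP x), ← tmul_move _ _ _ (hD x), ← TensorProduct.add_tmul]
    congr 1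
    ring
  constructor
  · refine ⟨inMapC i i' h - (inMapC i i' 1) ∘ₗ mulMap i i' h, outMap D, inMapC i i' 1,
      ?_, ?_, ?_, ?_⟩
    · refine LinearMap.ext fun r => ?_
      simp only [LinearMap.comp_apply, LinearMap.sub_apply, map_sub, inMapC_apply, mulMap_apply,
        hd, LinearMap.zero_apply]
      ring
    · refine LinearMap.ext fun r => ?_
      simp only [LinearMap.comp_apply, LinearMap.sub_apply, map_sub, inMapC_apply, mulMap_apply,
        outMap_tmul, hDh, hD1, LinearMap.id_apply]
      ring
    · refine ext_B fun x y => ?_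
      simp only [LinearMap.comp_apply, LinearMap.sub_apply, LinearMap.add_apply, inMapC_apply,
        mulMap_apply, outMap_tmul, hd, LinearMap.id_apply]
      rw [split x y, sub_mul, TensorProduct.tmul_sub, mul_comm (D x) h, mul_assoc]
      abel
    · refine LinearMap.ext fun r => ?_
      simp only [LinearMap.comp_apply, inMapC_apply, hd, LinearMap.id_apply, one_mul]
  · refine ⟨inMapC i i' 1, outMap LinearMap.id - mulMap i i' (2 * h) ∘ₗ outMap D, outMap D,
      ?_, ?_, ?_, ?_⟩
    · refine LinearMap.ext fun r => ?_
      simp only [LinearMap.comp_apply, LinearMap.sub_apply, map_add, hd'', mulMap_apply,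
        outMap_tmul, hDh, hD1, LinearMap.id_apply, LinearMap.zero_apply]
      ring
    · refine LinearMap.ext fun r => ?_
      simp only [LinearMap.comp_apply, LinearMap.sub_apply, inMapC_apply, mulMap_apply,
        outMap_tmul, hD1, LinearMap.id_apply]
      ring
    · refine ext_B fun x y => ?_
      simp only [LinearMap.comp_apply, LinearMap.sub_apply, LinearMap.add_apply, inMapC_apply,
        mulMap_apply, outMap_tmul, hd'', LinearMap.id_apply]
      rw [split x y, add_comm (h ⊗ₜ[swapInv K N i i'] (D x * y)), ← add_assoc,
        ← TensorProduct.tmul_add]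
      congr 2
      ring
    · refine LinearMap.ext fun r => ?_
      simp only [LinearMap.comp_apply, map_add, hd'', outMap_tmul, hDh, hD1, LinearMap.id_apply]
      ring
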